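/- For all integers n ≥ 2 it holds that Σ_{m=1}^{F_n−1} 1/( sin(πm/F_n)² · sin(πF_{n−1}m/F_n)² ) = (4n/75) F_{2n} − (17/1125) L_{2n} − (−1)^n · 116/1125 − 1/9. -/

import Mathlib

open Real

def lucas : ℕ → ℕ
  | 0 => 2
  | 1 => 1
  | (n + 2) => lucas (n + 1) + lucas n

/-!
Write `S(a, b) = ∑ csc² (π m / a) csc² (π b m / a)` over `1 ≤ m < a`. For coprime `g`, `h` and
`k = g + h`, apply the residue theorem to `csc² t · csc (g t) csc (h t) csc (k t)`, which in the
variable `z = exp (2 i t)` is, up to a constant, `z ^ k / ((z - 1) ^ 5 N_g N_h N_k)` with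
`N_a = 1 + z + ⋯ + z ^ (a - 1)`. At a zero of `sin (g t)` the other two cosecants agree up to sign,
since `k ≡ h` modulo `g`, and similarly at the zeros of `sin (h t)` and `sin (k t)`. The simple
poles therefore contribute `S(g, h) / g`, `S(h, g) / h` and `-S(k, h) / k`, while the pole at
`z = 1` contributes an explicit rational function of `g` and `h`. For consecutive Fibonacci numbers
this three-term reciprocity is an inhomogeneous Fibonacci recurrence for
`S(F_n, F_{n-1}) / F_n`, because `F_{n+1} ≡ F_{n-1}` modulo `F_n`; Cassini's identity shows that the
closed form satisfies it.
-/

open Polynomial (C X derivative eval taylor)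
open Lagrange (nodal)
open scoped Polynomial PowerSeries

section Residue

variable {F : Type*} [Field F]

lemma coeff_inv_X_sub_C {a : F} (ha : a ≠ 0) (d : ℕ) :
    PowerSeries.coeff d (PowerSeries.X - PowerSeries.C a)⁻¹ = -(a ^ (d + 1))⁻¹ := by
  have hconst : PowerSeries.constantCoeff (PowerSeries.X - PowerSeries.C a) ≠ 0 := by simpa using ha
  have hinv : (PowerSeries.X - PowerSeries.C a)⁻¹ = -PowerSeries.invUnitsSub (Units.mk0 a ha) := by
    rw [PowerSeries.inv_eq_iff_mul_eq_one hconst, neg_mul, ← mul_neg, neg_sub]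
    exact PowerSeries.invUnitsSub_mul_sub (Units.mk0 a ha)
  rw [hinv]
  simp [divp]

lemma eq_sum_C_mul_nodal_erase [DecidableEq F] {s : Finset F} {P : F[X]}
    (hP : P.degree < s.card) :
    P = ∑ ζ ∈ s, C (P.eval ζ / (derivative (nodal s id)).eval ζ) * nodal (s.erase ζ) id := by
  conv_lhs => rw [Lagrange.eq_interpolate Function.injective_id.injOn hP,
    Lagrange.interpolate_eq_nodalWeight_mul_nodal_div_X_sub_C]
  refine Finset.sum_congr rfl fun ζ hζ => ?_
  rw [Lagrange.nodalWeight_eq_eval_derivative_nodal hζ, Lagrange.nodal_erase_eq_nodal_div hζ,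
    div_eq_mul_inv, Polynomial.C_mul]
  simp only [id]
  ring

lemma eq_sum_C_mul_inv_X_sub_C {s : Finset F} {c : F} (hc : c ∉ s) {P : F[X]}
    (hP : P.degree < s.card) {φ : F⟦X⟧} (hφ : φ * taylor c (nodal s id) = taylor c P) :
    φ = ∑ ζ ∈ s, PowerSeries.C (P.eval ζ / (derivative (nodal s id)).eval ζ) *
      (PowerSeries.X - PowerSeries.C (ζ - c))⁻¹ := by
  classical
  have hnodal : (taylor c (nodal s id) : F⟦X⟧) ≠ 0 := by
    rw [Ne, Polynomial.coe_eq_zero_iff, Polynomial.taylor_eq_zero]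
    exact Lagrange.nodal_ne_zero
  refine mul_right_cancel₀ hnodal ?_
  rw [hφ]
  conv_lhs => rw [eq_sum_C_mul_nodal_erase hP]
  rw [Finset.sum_mul, map_sum, ← Polynomial.coeToPowerSeries.ringHom_apply, map_sum]
  refine Finset.sum_congr rfl fun ζ hζ => ?_
  have hfactor : (taylor c (nodal s id) : F⟦X⟧) =
      (PowerSeries.X - PowerSeries.C (ζ - c) : F⟦X⟧) * taylor c (nodal (s.erase ζ) id) := by
    rw [Lagrange.nodal_eq_mul_nodal_erase hζ, Polynomial.taylor_mul, Polynomial.coe_mul]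
    simp [sub_sub_eq_add_sub, add_sub_assoc]
  have hinv : (PowerSeries.X - PowerSeries.C (ζ - c))⁻¹ *
      (PowerSeries.X - PowerSeries.C (ζ - c)) = 1 := by
    refine PowerSeries.inv_mul_cancel _ ?_
    simpa [sub_eq_zero] using fun h : c = ζ => hc (h ▸ hζ)
  rw [hfactor, mul_assoc, ← mul_assoc _ (PowerSeries.X - _), hinv, one_mul]
  simp

theorem sum_eval_div_pow_mul_derivative_nodal {s : Finset F} {c : F} (hc : c ∉ s) {d : ℕ}
    {P : F[X]} (hP : P.degree < s.card + d) {φ : F⟦X⟧}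
    (hφ : φ * taylor c (nodal s id) = taylor c P) :
    ∑ ζ ∈ s, P.eval ζ / ((ζ - c) ^ (d + 1) * (derivative (nodal s id)).eval ζ) =
      -PowerSeries.coeff d φ := by
  have hmonic : (nodal s (id : F → F)).Monic := Lagrange.nodal_monic
  have hdeg : (nodal s (id : F → F)).degree = s.card := Lagrange.degree_nodal
  -- The quotient of `P` by the nodal polynomial has degree less than `d`, so it is invisible to the
  -- coefficient of degree `d`; the remainder expands in partial fractions.
  set Q := P /ₘ nodal s id
  set R := P %ₘ nodal s id
  have hdiv : R + nodal s id * Q = P := Polynomial.modByMonic_add_div P _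
  have hR : R.degree < s.card := hdeg ▸ Polynomial.degree_modByMonic_lt P hmonic
  have hQ : (taylor c Q).coeff d = 0 := by
    refine Polynomial.coeff_eq_zero_of_degree_lt ?_
    rw [Polynomial.degree_taylor]
    rcases lt_or_ge P.degree (nodal s id).degree with hlt | hge
    · rw [show Q = 0 from (Polynomial.divByMonic_eq_zero_iff hmonic).2 hlt]
      exact WithBot.bot_lt_coe d
    · rw [← Polynomial.degree_add_divByMonic hmonic hge, hdeg] at hP
      exact lt_of_add_lt_add_left hP
  have hφR : (φ - (taylor c Q : F[X])) * (taylor c (nodal s id) : F[X]) = taylor c R := by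
    rw [sub_mul, hφ, ← hdiv]
    simp [Polynomial.taylor_mul, mul_comm]
  have hcoeff := congrArg (PowerSeries.coeff d) (eq_sum_C_mul_inv_X_sub_C hc hR hφR)
  rw [map_sub, Polynomial.coeff_coe, hQ, sub_zero] at hcoeff
  rw [hcoeff, map_sum, ← Finset.sum_neg_distrib]
  refine Finset.sum_congr rfl fun ζ hζ => ?_
  have hPR : P.eval ζ = R.eval ζ := by
    rw [← hdiv, Polynomial.eval_add, Polynomial.eval_mul,
      show (nodal s id).eval ζ = 0 from Lagrange.eval_nodal_at_node (v := id) hζ]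
    simp
  have hζc : ζ - c ≠ 0 := sub_ne_zero.2 fun h => hc (h ▸ hζ)
  rw [PowerSeries.coeff_C_mul, coeff_inv_X_sub_C hζc, hPR, div_mul_eq_div_div_swap, mul_neg,
    neg_neg, div_eq_mul_inv _ ((ζ - c) ^ (d + 1))]

end Residue

section Korobov

variable (K : Type*) [Field K]

/-- The polynomial `1 + X + ⋯ + X ^ (a - 1) = (X ^ a - 1) / (X - 1)`. -/
noncomputable def geomPoly (a : ℕ) : K[X] := ∑ i ∈ Finset.range a, X ^ i

/-- The power series `X / ((1 + X) ^ a - 1)`, which is `1 / a` times the generating function of the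
Korobov numbers of the first kind. It is defined through the Taylor expansion of `geomPoly K a` at
`1` because its constant term `a` is invertible, whereas `(1 + X) ^ a - 1` has constant term `0`. -/
noncomputable def korobovSeries (a : ℕ) : K⟦X⟧ := (taylor 1 (geomPoly K a) : K⟦X⟧)⁻¹

variable {K}

lemma X_sub_one_mul_geomPoly (a : ℕ) : (X - 1) * geomPoly K a = X ^ a - 1 :=
  mul_geom_sum X a

lemma sub_one_mul_eval_geomPoly (a : ℕ) (z : K) : (z - 1) * (geomPoly K a).eval z = z ^ a - 1 := by
  simpa using congrArg (eval z) (X_sub_one_mul_geomPoly (K := K) a)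

lemma X_mul_taylor_geomPoly (a : ℕ) :
    (X : K[X]) * taylor 1 (geomPoly K a) = (X + 1) ^ a - 1 := by
  simpa using congrArg (taylor 1) (X_sub_one_mul_geomPoly (K := K) a)

lemma coeff_taylor_geomPoly (a i : ℕ) :
    (taylor 1 (geomPoly K a)).coeff i = a.choose (i + 1) := by
  rw [← Polynomial.coeff_X_mul, X_mul_taylor_geomPoly, Polynomial.coeff_sub,
    Polynomial.coeff_X_add_one_pow]
  simp [Polynomial.coeff_one]

lemma korobovSeries_mul_taylor_geomPoly {a : ℕ} (ha : (a : K) ≠ 0) :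
    korobovSeries K a * taylor 1 (geomPoly K a) = 1 := by
  refine PowerSeries.inv_mul_cancel _ ?_
  rw [← PowerSeries.coeff_zero_eq_constantCoeff_apply, Polynomial.coeff_coe, coeff_taylor_geomPoly,
    zero_add, Nat.choose_one_right]
  exact ha

lemma korobovSeries_mul_taylor_mul_geomPoly {a b c : ℕ} (ha : (a : K) ≠ 0) (hb : (b : K) ≠ 0)
    (hc : (c : K) ≠ 0) :
    korobovSeries K a * korobovSeries K b * (korobovSeries K c + PowerSeries.X) *
      ((taylor 1 (geomPoly K a * (geomPoly K b * geomPoly K c)) : K[X]) : K⟦X⟧) =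
      ((taylor 1 (X ^ c) : K[X]) : K⟦X⟧) := by
  have hX : taylor 1 (X ^ c : K[X]) = 1 + X * taylor 1 (geomPoly K c) := by
    rw [X_mul_taylor_geomPoly, Polynomial.taylor_X_pow, Polynomial.C_1, add_sub_cancel]
  have inv_a := korobovSeries_mul_taylor_geomPoly ha
  have inv_b := korobovSeries_mul_taylor_geomPoly hb
  have inv_c := korobovSeries_mul_taylor_geomPoly hc
  rw [hX, Polynomial.taylor_mul, Polynomial.taylor_mul]
  push_cast
  set A : K⟦X⟧ := ((taylor 1 (geomPoly K a) : K[X]) : K⟦X⟧)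
  set B : K⟦X⟧ := ((taylor 1 (geomPoly K b) : K[X]) : K⟦X⟧)
  set D : K⟦X⟧ := ((taylor 1 (geomPoly K c) : K[X]) : K⟦X⟧)
  calc
    _ = (korobovSeries K a * A) * (korobovSeries K b * B) *
        (korobovSeries K c * D + PowerSeries.X * D) := by ring
    _ = 1 + PowerSeries.X * D := by rw [inv_a, inv_b, inv_c, one_mul, one_mul]

lemma sum_choose_mul_coeff_korobovSeries {a : ℕ} (ha : (a : K) ≠ 0) (n : ℕ) :
    ∑ i ∈ Finset.range (n + 1), PowerSeries.coeff i (korobovSeries K a) * a.choose (n - i + 1) =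
      if n = 0 then 1 else 0 := by
  have h := congrArg (PowerSeries.coeff n) (korobovSeries_mul_taylor_geomPoly ha)
  rw [PowerSeries.coeff_mul, PowerSeries.coeff_one,
    Finset.Nat.sum_antidiagonal_eq_sum_range_succ_mk] at h
  simpa only [Polynomial.coeff_coe, coeff_taylor_geomPoly] using h

variable [CharZero K]

lemma coeff_korobovSeries {a : ℕ} (ha : 0 < a) :
    PowerSeries.coeff 0 (korobovSeries K a) = 1 / a ∧
    PowerSeries.coeff 1 (korobovSeries K a) = -(a - 1) / (2 * a) ∧
    PowerSeries.coeff 2 (korobovSeries K a) = (a ^ 2 - 1) / (12 * a) ∧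
    PowerSeries.coeff 3 (korobovSeries K a) = -(a ^ 2 - 1) / (24 * a) ∧
    PowerSeries.coeff 4 (korobovSeries K a) = -(a ^ 2 - 1) * (a ^ 2 - 19) / (720 * a) := by
  have ha' : (a : K) ≠ 0 := Nat.cast_ne_zero.2 ha.ne'
  have choose_eq (i : ℕ) := Nat.cast_choose_eq_descPochhammer_div K a i
  have recurrence (n : ℕ) := sum_choose_mul_coeff_korobovSeries ha' n
  have h0 := recurrence 0
  have h1 := recurrence 1
  have h2 := recurrence 2
  have h3 := recurrence 3
  have h4 := recurrence 4
  norm_num [Finset.sum_range_succ, choose_eq, descPochhammer_succ_right, Nat.factorial,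
    -PowerSeries.coeff_zero_eq_constantCoeff] at h0 h1 h2 h3 h4
  have c0 := eq_one_div_of_mul_eq_one_left h0
  have c1 : PowerSeries.coeff 1 (korobovSeries K a) = -(a - 1) / (2 * a) := by
    rw [c0] at h1
    field_simp at h1 ⊢
    linear_combination h1
  have c2 : PowerSeries.coeff 2 (korobovSeries K a) = (a ^ 2 - 1) / (12 * a) := by
    rw [c0, c1] at h2
    field_simp at h2 ⊢
    linear_combination (1 / 2) * h2
  have c3 : PowerSeries.coeff 3 (korobovSeries K a) = -(a ^ 2 - 1) / (24 * a) := by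
    rw [c0, c1, c2] at h3
    field_simp at h3 ⊢
    linear_combination (1 / 144) * h3
  have c4 : PowerSeries.coeff 4 (korobovSeries K a) =
      -(a ^ 2 - 1) * (a ^ 2 - 19) / (720 * a) := by
    rw [c0, c1, c2, c3] at h4
    field_simp at h4 ⊢
    linear_combination (1 / 576) * h4
  exact ⟨c0, c1, c2, c3, c4⟩

lemma coeff_four_korobovSeries_mul {g h : ℕ} (hg : 0 < g) (hh : 0 < h) :
    PowerSeries.coeff 4 (korobovSeries K g * korobovSeries K h *
      (korobovSeries K (g + h) + PowerSeries.X)) =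
    (3 * (g ^ 2 + g * h + h ^ 2 : K) ^ 2 + 5 * (g ^ 2 + g * h + h ^ 2) + 3) / 720 /
      (g * h * (g + h)) := by
  obtain ⟨g0, g1, g2, g3, g4⟩ := coeff_korobovSeries (K := K) hg
  obtain ⟨h0, h1, h2, h3, h4⟩ := coeff_korobovSeries (K := K) hh
  obtain ⟨k0, k1, k2, k3, k4⟩ := coeff_korobovSeries (K := K) (Nat.add_pos_left hg h)
  have hg' : (g : K) ≠ 0 := Nat.cast_ne_zero.2 hg.ne'
  have hh' : (h : K) ≠ 0 := Nat.cast_ne_zero.2 hh.ne'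
  have hk' : (g + h : K) ≠ 0 := by exact_mod_cast (Nat.add_pos_left hg h).ne'
  simp only [PowerSeries.coeff_mul, Finset.Nat.sum_antidiagonal_succ,
    Finset.Nat.antidiagonal_zero, Finset.sum_singleton, map_add, PowerSeries.coeff_X,
    g0, g1, g2, g3, g4, h0, h1, h2, h3, h4, k0, k1, k2, k3, k4]
  norm_num [g0, g1, g2, g3, g4, h0, h1, h2, h3, h4, k0, k1, k2, k3, k4]
  field_simp
  ring

end Korobov

section RootsOfUnity

variable (K : Type*) [Field K] [DecidableEq K]

/-- The `a`-th roots of unity in `K` other than `1`. -/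
noncomputable def nontrivialRootsOfUnity (a : ℕ) : Finset K :=
  (Polynomial.nthRootsFinset a (1 : K)).erase 1

variable {K}

lemma mem_nontrivialRootsOfUnity {a : ℕ} (ha : 0 < a) {z : K} :
    z ∈ nontrivialRootsOfUnity K a ↔ z ≠ 1 ∧ z ^ a = 1 := by
  rw [nontrivialRootsOfUnity, Finset.mem_erase, Polynomial.mem_nthRootsFinset ha]

lemma pow_ne_one_of_mem_nontrivialRootsOfUnity {a b : ℕ} (ha : 0 < a) (hab : a.Coprime b) {z : K}
    (hz : z ∈ nontrivialRootsOfUnity K a) : z ^ b ≠ 1 := by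
  obtain ⟨hz1, hza⟩ := (mem_nontrivialRootsOfUnity ha).1 hz
  exact fun hzb => hz1 (by simpa [hab.gcd_eq_one] using pow_gcd_eq_one.2 ⟨hza, hzb⟩)

lemma disjoint_nontrivialRootsOfUnity {a b : ℕ} (ha : 0 < a) (hb : 0 < b) (hab : a.Coprime b) :
    Disjoint (nontrivialRootsOfUnity K a) (nontrivialRootsOfUnity K b) :=
  Finset.disjoint_left.2 fun _ hza hzb =>
    pow_ne_one_of_mem_nontrivialRootsOfUnity ha hab hza ((mem_nontrivialRootsOfUnity hb).1 hzb).2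

lemma sum_nontrivialRootsOfUnity {M : Type*} [AddCommMonoid M] {a : ℕ} (ha : 0 < a) {ω : K}
    (hω : IsPrimitiveRoot ω a) (f : K → M) :
    ∑ z ∈ nontrivialRootsOfUnity K a, f z = ∑ j ∈ Finset.Ico 1 a, f (ω ^ j) := by
  have : NeZero a := ⟨ha.ne'⟩
  refine (Finset.sum_bij (fun j _ => ω ^ j) (fun j hj => ?_) (fun i hi j hj => ?_)
    (fun z hz => ?_) fun _ _ => rfl).symm
  · rw [Finset.mem_Ico] at hj
    rw [mem_nontrivialRootsOfUnity ha, pow_right_comm, hω.pow_eq_one, one_pow]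
    exact ⟨hω.pow_ne_one_of_pos_of_lt (Nat.one_le_iff_ne_zero.1 hj.1) hj.2, rfl⟩
  · exact hω.pow_inj (Finset.mem_Ico.1 hi).2 (Finset.mem_Ico.1 hj).2
  · obtain ⟨hz1, hza⟩ := (mem_nontrivialRootsOfUnity ha).1 hz
    obtain ⟨j, hj, rfl⟩ := hω.eq_pow_of_pow_eq_one hza
    refine ⟨j, Finset.mem_Ico.2 ⟨Nat.one_le_iff_ne_zero.2 ?_, hj⟩, rfl⟩
    rintro rfl
    exact hz1 (pow_zero ω)

lemma eval_geomPoly_eq_zero {a : ℕ} (ha : 0 < a) {z : K} (hz : z ∈ nontrivialRootsOfUnity K a) :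
    (geomPoly K a).eval z = 0 := by
  obtain ⟨hz1, hza⟩ := (mem_nontrivialRootsOfUnity ha).1 hz
  simpa [hza, sub_eq_zero, hz1] using sub_one_mul_eval_geomPoly a z

lemma eval_derivative_geomPoly {a : ℕ} (ha : 0 < a) {z : K}
    (hz : z ∈ nontrivialRootsOfUnity K a) :
    (z - 1) * z * (derivative (geomPoly K a)).eval z = a := by
  have h := congrArg (fun P => z * eval z (derivative P)) (X_sub_one_mul_geomPoly (K := K) a)
  simp only [Polynomial.derivative_mul, Polynomial.derivative_sub, Polynomial.derivative_X,
    Polynomial.derivative_one, sub_zero, one_mul, Polynomial.derivative_X_pow,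
    Polynomial.eval_add, Polynomial.eval_mul, Polynomial.eval_sub, Polynomial.eval_X,
    Polynomial.eval_one, Polynomial.eval_pow, Polynomial.eval_C, eval_geomPoly_eq_zero ha hz] at h
  rw [mul_left_comm z (a : K), mul_pow_sub_one ha.ne',
    ((mem_nontrivialRootsOfUnity ha).1 hz).2] at h
  linear_combination h

lemma disjoint_union_nontrivialRootsOfUnity {a b c : ℕ} (ha : 0 < a) (hb : 0 < b) (hc : 0 < c)
    (hab : a.Coprime b) (hac : a.Coprime c) :
    Disjoint (nontrivialRootsOfUnity K a)
      (nontrivialRootsOfUnity K b ∪ nontrivialRootsOfUnity K c) :=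
  Finset.disjoint_union_right.2
    ⟨disjoint_nontrivialRootsOfUnity ha hb hab, disjoint_nontrivialRootsOfUnity ha hc hac⟩

variable [IsAlgClosed K] [CharZero K]

lemma nodal_nontrivialRootsOfUnity {a : ℕ} (ha : 0 < a) :
    nodal (nontrivialRootsOfUnity K a) id = geomPoly K a := by
  have : NeZero a := ⟨ha.ne'⟩
  obtain ⟨ω, hω⟩ := HasEnoughRootsOfUnity.exists_primitiveRoot K a
  have h1 : (1 : K) ∈ Polynomial.nthRootsFinset a (1 : K) :=
    Polynomial.one_mem_nthRootsFinset ha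
  refine mul_left_cancel₀ (Polynomial.X_sub_C_ne_zero (id 1 : K)) ?_
  rw [nodal, nontrivialRootsOfUnity, Finset.mul_prod_erase _ (fun ζ => X - C (id ζ)) h1, id,
    Polynomial.C_1, X_sub_one_mul_geomPoly, Polynomial.X_pow_sub_one_eq_prod ha hω]
  rfl

lemma nodal_union_nontrivialRootsOfUnity {a b c : ℕ} (ha : 0 < a) (hb : 0 < b) (hc : 0 < c)
    (hab : a.Coprime b) (hac : a.Coprime c) (hbc : b.Coprime c) :
    nodal (nontrivialRootsOfUnity K a ∪
      (nontrivialRootsOfUnity K b ∪ nontrivialRootsOfUnity K c)) id =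
      geomPoly K a * (geomPoly K b * geomPoly K c) := by
  rw [nodal, Finset.prod_union (disjoint_union_nontrivialRootsOfUnity ha hb hc hab hac),
    Finset.prod_union (disjoint_nontrivialRootsOfUnity hb hc hbc), ← nodal, ← nodal, ← nodal,
    nodal_nontrivialRootsOfUnity ha, nodal_nontrivialRootsOfUnity hb,
    nodal_nontrivialRootsOfUnity hc]

lemma card_nontrivialRootsOfUnity {a : ℕ} (ha : 0 < a) :
    (nontrivialRootsOfUnity K a).card = a - 1 := by
  have : NeZero a := ⟨ha.ne'⟩
  obtain ⟨ω, hω⟩ := HasEnoughRootsOfUnity.exists_primitiveRoot K a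
  have h1 : (1 : K) ∈ Polynomial.nthRootsFinset a (1 : K) :=
    Polynomial.one_mem_nthRootsFinset ha
  rw [nontrivialRootsOfUnity, Finset.card_erase_of_mem h1, hω.card_nthRootsFinset]

end RootsOfUnity

section Reciprocity

variable {K : Type*} [Field K]

/-- The function `csc ^ 2` in exponential coordinates: at `z = exp (2 * t * I)` its value is
`1 / sin t ^ 2`. -/
noncomputable def cscSq (z : K) : K := -4 * z / (z - 1) ^ 2

lemma cscSq_mul_cscSq_div (z w c : K) :
    cscSq z * cscSq w / c = 16 * (w * z / (c * (z - 1) ^ 2 * (w - 1) ^ 2)) := by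
  rw [cscSq, cscSq, div_mul_div_comm, div_div, ← mul_div_assoc]
  congr 1 <;> ring

variable [DecidableEq K]

variable (K) in
/-- The Dedekind-type sum `∑ csc² (π m / a) * csc² (π b m / a)` over `1 ≤ m < a`, with
`m` encoded by the root of unity `exp (2 π i m / a)`. -/
noncomputable def cscSqSum (a b : ℕ) : K :=
  ∑ z ∈ nontrivialRootsOfUnity K a, cscSq z * cscSq (z ^ b)

lemma cscSqSum_congr {a b c : ℕ} (ha : 0 < a) (h : b ≡ c [MOD a]) :
    cscSqSum K a b = cscSqSum K a c := by
  refine Finset.sum_congr rfl fun z hz => ?_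
  rw [pow_eq_pow_of_modEq h ((mem_nontrivialRootsOfUnity ha).1 hz).2]

lemma cscSqSum_one (b : ℕ) : cscSqSum K 1 b = 0 := by
  refine Finset.sum_eq_zero fun z hz => ?_
  obtain ⟨hz1, hz⟩ := (mem_nontrivialRootsOfUnity one_pos).1 hz
  exact absurd (pow_one z ▸ hz) hz1

lemma pow_div_pow_mul_eval_derivative {a b c : ℕ} (ha : 0 < a) {z : K}
    (hz : z ∈ nontrivialRootsOfUnity K a) (e : ℕ) :
    z ^ e / ((z - 1) ^ 5 *
        (derivative (geomPoly K a * (geomPoly K b * geomPoly K c))).eval z) =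
      z ^ (e + 1) / (a * (z - 1) ^ 2 * ((z ^ b - 1) * (z ^ c - 1))) := by
  have hza := ((mem_nontrivialRootsOfUnity ha).1 hz).2
  have hz0 : z ≠ 0 := fun h => by simp [h, ha.ne'] at hza
  rw [Polynomial.derivative_mul, Polynomial.eval_add, Polynomial.eval_mul, Polynomial.eval_mul,
    Polynomial.eval_mul, eval_geomPoly_eq_zero ha hz, zero_mul, add_zero,
    ← eval_derivative_geomPoly ha hz, ← sub_one_mul_eval_geomPoly, ← sub_one_mul_eval_geomPoly,
    pow_succ z e, ← mul_div_mul_right _ _ hz0]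
  congr 1
  ring

lemma sum_residue_of_modEq {a b c e : ℕ} (ha : 0 < a) (hc : c ≡ b [MOD a]) (he : e ≡ b [MOD a]) :
    16 * ∑ z ∈ nontrivialRootsOfUnity K a, z ^ e / ((z - 1) ^ 5 *
        (derivative (geomPoly K a * (geomPoly K b * geomPoly K c))).eval z) =
      cscSqSum K a b / a := by
  rw [cscSqSum, Finset.sum_div, Finset.mul_sum]
  refine Finset.sum_congr rfl fun z hz => ?_
  have hza := ((mem_nontrivialRootsOfUnity ha).1 hz).2
  rw [pow_div_pow_mul_eval_derivative ha hz, pow_succ z e, pow_eq_pow_of_modEq hc hza,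
    pow_eq_pow_of_modEq he hza, cscSq_mul_cscSq_div, sq (z ^ b - 1)]

lemma sum_residue_of_add_modEq_zero {a b c e : ℕ} (ha : 0 < a) (hbc : b + c ≡ 0 [MOD a])
    (he : e ≡ 0 [MOD a]) :
    16 * ∑ z ∈ nontrivialRootsOfUnity K a, z ^ e / ((z - 1) ^ 5 *
        (derivative (geomPoly K a * (geomPoly K b * geomPoly K c))).eval z) =
      -(cscSqSum K a b / a) := by
  rw [cscSqSum, Finset.sum_div, Finset.mul_sum, ← Finset.sum_neg_distrib]
  refine Finset.sum_congr rfl fun z hz => ?_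
  have hza := ((mem_nontrivialRootsOfUnity ha).1 hz).2
  have hzbc : z ^ b * z ^ c = 1 := by rw [← pow_add, pow_eq_pow_of_modEq hbc hza, pow_zero]
  have hzb : z ^ b ≠ 0 := left_ne_zero_of_mul_eq_one hzbc
  have hprod : (z ^ b - 1) * (z ^ c - 1) = -((z ^ b - 1) ^ 2 / z ^ b) := by
    rw [eq_inv_of_mul_eq_one_right hzbc]
    field_simp
    ring
  rw [pow_div_pow_mul_eval_derivative ha hz, pow_succ z e, pow_eq_pow_of_modEq he hza, hprod,
    pow_zero, one_mul, mul_neg, div_neg, ← mul_div_assoc, div_div_eq_mul_div, mul_comm z,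
    mul_neg, cscSq_mul_cscSq_div]

section Coprime

variable [IsAlgClosed K] [CharZero K]

lemma sum_pow_div_pow_mul_eval_derivative {a b c : ℕ} (ha : 0 < a) (hb : 0 < b) (hc : 0 < c)
    (hab : a.Coprime b) (hac : a.Coprime c) (hbc : b.Coprime c) :
    ∑ z ∈ nontrivialRootsOfUnity K a ∪ (nontrivialRootsOfUnity K b ∪ nontrivialRootsOfUnity K c),
      z ^ c / ((z - 1) ^ 5 *
        (derivative (geomPoly K a * (geomPoly K b * geomPoly K c))).eval z) =
      -PowerSeries.coeff 4
        (korobovSeries K a * korobovSeries K b * (korobovSeries K c + PowerSeries.X)) := by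
  have hnodal := nodal_union_nontrivialRootsOfUnity (K := K) ha hb hc hab hac hbc
  set s := nontrivialRootsOfUnity K a ∪ (nontrivialRootsOfUnity K b ∪ nontrivialRootsOfUnity K c)
    with hs
  have h1 : (1 : K) ∉ s := by simp [hs, nontrivialRootsOfUnity]
  have hdeg : (X ^ c : K[X]).degree < s.card + (4 : ℕ) := by
    have hcard : c - 1 ≤ s.card := card_nontrivialRootsOfUnity (K := K) hc ▸
      Finset.card_le_card (Finset.subset_union_right.trans Finset.subset_union_right)
    rw [Polynomial.degree_X_pow]
    exact_mod_cast (by omega : c < s.card + 4)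
  have hseries := korobovSeries_mul_taylor_mul_geomPoly (K := K) (Nat.cast_ne_zero.2 ha.ne')
    (Nat.cast_ne_zero.2 hb.ne') (Nat.cast_ne_zero.2 hc.ne')
  rw [← hnodal] at hseries ⊢
  simpa only [Polynomial.eval_pow, Polynomial.eval_X] using
    sum_eval_div_pow_mul_derivative_nodal h1 hdeg hseries

theorem cscSqSum_reciprocity {g h : ℕ} (hg : 0 < g) (hh : 0 < h) (hgh : g.Coprime h) :
    cscSqSum K g h / g + cscSqSum K h g / h - cscSqSum K (g + h) h / (g + h) =
      -(3 * (g ^ 2 + g * h + h ^ 2 : K) ^ 2 + 5 * (g ^ 2 + g * h + h ^ 2) + 3) / 45 /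
        (g * h * (g + h)) := by
  have hk : 0 < g + h := Nat.add_pos_left hg h
  have hgk : g.Coprime (g + h) := by simpa using hgh
  have hhk : h.Coprime (g + h) := by simpa using hgh.symm
  have residues := sum_pow_div_pow_mul_eval_derivative (K := K) hg hh hk hgh hgk hhk
  rw [Finset.sum_union (disjoint_union_nontrivialRootsOfUnity hg hh hk hgh hgk),
    Finset.sum_union (disjoint_nontrivialRootsOfUnity hh hk hhk),
    coeff_four_korobovSeries_mul hg hh] at residues
  have residue_g := sum_residue_of_modEq (K := K) hg (b := h) (c := g + h) (e := g + h)
    (by simp) (by simp)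
  have residue_h := sum_residue_of_modEq (K := K) hh (b := g) (c := g + h) (e := g + h)
    (by simp) (by simp)
  have residue_k := sum_residue_of_add_modEq_zero (K := K) hk (b := h) (c := g) (e := g + h)
    (by simp [add_comm, Nat.ModEq]) (by simp [Nat.ModEq])
  rw [mul_left_comm] at residue_h
  rw [mul_comm (geomPoly K (g + h)), mul_comm (geomPoly K h), mul_assoc] at residue_k
  push_cast at residue_k
  linear_combination -residue_g - residue_h - residue_k + 16 * residues

end Coprime

end Reciprocity

section Fibonacci

lemma natCast_lucas (n : ℕ) : (lucas n : ℤ) = 2 * Nat.fib (n + 1) - Nat.fib n := by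
  induction n using Nat.twoStepInduction with
  | zero => simp [lucas]
  | one => simp [lucas]
  | more n ih ih' =>
    rw [lucas, Nat.cast_add, ih, ih', Nat.fib_add_two (n := n + 1), Nat.fib_add_two (n := n)]
    push_cast
    ring

lemma fib_cassini (n : ℕ) :
    (Nat.fib (n + 1) ^ 2 - Nat.fib (n + 1) * Nat.fib n - Nat.fib n ^ 2 : ℤ) = (-1) ^ n := by
  induction n with
  | zero => simp
  | succ n ih =>
    rw [pow_succ (-1 : ℤ), ← ih, Nat.fib_add_two]
    push_cast
    ring

lemma natCast_fib_two_mul (n : ℕ) : (Nat.fib (2 * n) : ℤ) = Nat.fib n * lucas n := by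
  have hle : Nat.fib n ≤ 2 * Nat.fib (n + 1) := by
    linarith [Nat.fib_le_fib_succ (n := n), Nat.zero_le (Nat.fib (n + 1))]
  rw [Nat.fib_two_mul, natCast_lucas, Nat.cast_mul, Nat.cast_sub hle]
  norm_num

lemma natCast_lucas_two_mul (n : ℕ) :
    (lucas (2 * n) : ℤ) = 5 * (Nat.fib n : ℤ) ^ 2 + 2 * (-1) ^ n := by
  rw [natCast_lucas, Nat.fib_two_mul_add_one, natCast_fib_two_mul, natCast_lucas, ← fib_cassini]
  push_cast
  ring

variable (K : Type*) [Field K] [DecidableEq K] [IsAlgClosed K] [CharZero K]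

lemma cscSqSum_fib_recurrence (n : ℕ) :
    (cscSqSum K (Nat.fib (n + 3)) (Nat.fib (n + 2)) / Nat.fib (n + 3) : K) =
      cscSqSum K (Nat.fib (n + 2)) (Nat.fib (n + 1)) / Nat.fib (n + 2) +
      cscSqSum K (Nat.fib (n + 1)) (Nat.fib n) / Nat.fib (n + 1) +
      (3 * (Nat.fib (n + 1) ^ 2 + Nat.fib (n + 1) * Nat.fib (n + 2) + Nat.fib (n + 2) ^ 2 : K) ^ 2 +
        5 * (Nat.fib (n + 1) ^ 2 + Nat.fib (n + 1) * Nat.fib (n + 2) + Nat.fib (n + 2) ^ 2) +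
        3) / 45 /
        (Nat.fib (n + 1) * Nat.fib (n + 2) * Nat.fib (n + 3)) := by
  have hpos : 0 < Nat.fib (n + 1) := Nat.fib_pos.2 n.succ_pos
  have hmod : Nat.fib (n + 2) ≡ Nat.fib n [MOD Nat.fib (n + 1)] := by
    simp [Nat.fib_add_two, Nat.ModEq]
  have hrec := cscSqSum_reciprocity (K := K) hpos (Nat.fib_pos.2 (n + 1).succ_pos)
    (Nat.fib_coprime_fib_succ (n + 1))
  rw [cscSqSum_congr hpos hmod, ← Nat.cast_add, ← Nat.fib_add_two] at hrec
  linear_combination -hrec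

lemma cscSqSum_fib_eq (n : ℕ) :
    (cscSqSum K (Nat.fib (n + 1)) (Nat.fib n) : K) =
      (12 * (n + 1) * (Nat.fib (n + 1) * (Nat.fib (n + 1) + 2 * Nat.fib n)) -
        17 * Nat.fib (n + 1) ^ 2 + 30 * (-1) ^ n - 25) / 225 := by
  induction n using Nat.twoStepInduction with
  | zero => norm_num [cscSqSum_one]
  | one => norm_num [cscSqSum_one]
  | more n ih ih' =>
    have hcassini : (Nat.fib (n + 1) ^ 2 - Nat.fib (n + 1) * Nat.fib n - Nat.fib n ^ 2 : K) =
        (-1) ^ n := by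
      exact_mod_cast congrArg (Int.cast : ℤ → K) (fib_cassini n)
    have hsq : (Nat.fib (n + 1) ^ 2 - Nat.fib (n + 1) * Nat.fib n - Nat.fib n ^ 2 : K) ^ 2 = 1 := by
      rw [hcassini, pow_right_comm, neg_one_sq, one_pow]
    have hne (i : ℕ) : (Nat.fib (i + 1) : K) ≠ 0 :=
      Nat.cast_ne_zero.2 (Nat.fib_pos.2 i.succ_pos).ne'
    have h1 := hne n
    have h2 := hne (n + 1)
    have h3 := hne (n + 2)
    have hrec := cscSqSum_fib_recurrence K n
    rw [ih, ih', div_eq_iff h3] at hrec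
    rw [hrec, pow_succ _ (n + 1), pow_succ _ n, ← hcassini]
    push_cast [Nat.fib_add_two (n := n + 1), Nat.fib_add_two (n := n)] at h2 h3 ⊢
    field_simp
    linear_combination (-675) * hsq

theorem cscSqSum_fib (n : ℕ) :
    (cscSqSum K (Nat.fib (n + 1)) (Nat.fib n) : K) =
      4 * (n + 1) / 75 * Nat.fib (2 * (n + 1)) - 17 / 1125 * lucas (2 * (n + 1)) +
        (-1) ^ n * (116 / 1125) - 1 / 9 := by
  have hfib : (Nat.fib (2 * (n + 1)) : K) =
      Nat.fib (n + 1) * (Nat.fib (n + 1) + 2 * Nat.fib n) := by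
    have h := congrArg (Int.cast : ℤ → K) (natCast_fib_two_mul (n + 1))
    rw [natCast_lucas, Nat.fib_add_two (n := n)] at h
    push_cast at h
    linear_combination h
  have hlucas : (lucas (2 * (n + 1)) : K) = 5 * (Nat.fib (n + 1) : K) ^ 2 - 2 * (-1) ^ n := by
    have h := congrArg (Int.cast : ℤ → K) (natCast_lucas_two_mul (n + 1))
    push_cast at h
    linear_combination h
  rw [cscSqSum_fib_eq, hfib, hlucas]
  ring

end Fibonacci

section Trigonometric

lemma cscSq_exp (t : ℂ) : cscSq (Complex.exp (2 * (t * Complex.I))) = 1 / Complex.sin t ^ 2 := by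
  have hsin : Complex.sin t ^ 2 = -(Complex.exp (t * Complex.I) ^ 2 - 1) ^ 2 /
      (4 * Complex.exp (t * Complex.I) ^ 2) := by
    have hexp := Complex.exp_ne_zero (t * Complex.I)
    rw [Complex.sin, neg_mul, Complex.exp_neg]
    field_simp
    rw [Complex.I_sq]
    ring
  rw [hsin, cscSq, one_div_div, two_mul, Complex.exp_add, ← sq, div_neg, neg_mul, neg_div]

lemma sum_one_div_sin_sq_mul_sin_sq {a : ℕ} (ha : 0 < a) (b : ℕ) :
    ((∑ m ∈ Finset.Ico 1 a, 1 / (Real.sin (π * m / a) ^ 2 * Real.sin (π * b * m / a) ^ 2) : ℝ) : ℂ)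
      = cscSqSum ℂ a b := by
  rw [cscSqSum, sum_nontrivialRootsOfUnity ha (Complex.isPrimitiveRoot_exp a ha.ne')]
  push_cast
  refine Finset.sum_congr rfl fun m _ => ?_
  rw [← pow_mul, ← Complex.exp_nat_mul, ← Complex.exp_nat_mul, ← one_div_mul_one_div,
    ← cscSq_exp, ← cscSq_exp]
  congr 3
  · ring
  · push_cast
    ring

end Trigonometric

/-- Closed-form expression for the tensor product energy sum of the Fibonacci lattice. -/
theorem closed_form_sigma_two (n : ℕ) (hn : 2 ≤ n) :
    ∑ m ∈ Finset.Ico 1 (Nat.fib n),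
        1 / (Real.sin (π * m / Nat.fib n) ^ 2 *
              Real.sin (π * Nat.fib (n - 1) * m / Nat.fib n) ^ 2)
      = (4 * (n : ℝ) / 75) * Nat.fib (2 * n) - (17 / 1125) * lucas (2 * n)
        - (-1 : ℝ) ^ n * (116 / 1125) - 1 / 9 := by
  obtain ⟨m, rfl⟩ := Nat.exists_eq_add_of_le' (one_le_two.trans hn)
  have hpos : 0 < Nat.fib (m + 1) := Nat.fib_pos.2 m.succ_pos
  rw [← Complex.ofReal_inj, Nat.add_sub_cancel, sum_one_div_sin_sq_mul_sin_sq hpos, cscSqSum_fib]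
  push_cast
  ring
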